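/- Let q be odd, 0 < 2t ≤ m, 0 < 2k ≤ m. Define W_{2k}(2t,m) = #{A skew-symmetric m×m of rank ≤ 2t : tr(E_{2k}A) ≠ 0} and P_m(2k,2r) = q^{2r} w_{2k-2}(2r, m-2) + (q-1)q^{2r-1}(n_a(2r,m-1) - n_a(2r,m-2)). Then W_{2k}(2t,m) = P_m(2k,2t) + (q-1)q^{m-2} N_a(2t-2, m-1), where N_a(2s,m) = ∑_{r=0}^{s} n_a(2r,m). -/

import Mathlib

open Matrix
def IsSkewSym {K : Type} [Field K] {m : ℕ} (A : Matrix (Fin m) (Fin m) K) : Prop :=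
  Aᵀ = -A ∧ ∀ i, A i i = 0

def Estd (K : Type) [Field K] (k m : ℕ) : Matrix (Fin m) (Fin m) K :=
  Matrix.of fun i j =>
    if j.val = i.val + 1 ∧ i.val % 2 = 0 ∧ j.val < 2*k then 1
    else if i.val = j.val + 1 ∧ j.val % 2 = 0 ∧ i.val < 2*k then -1 else 0

noncomputable def na (K : Type) [Field K] (r m : ℕ) : ℕ :=
  Nat.card {A : Matrix (Fin m) (Fin m) K // IsSkewSym A ∧ A.rank = r}

noncomputable def Na (K : Type) [Field K] (r m : ℕ) : ℕ :=
  Nat.card {A : Matrix (Fin m) (Fin m) K // IsSkewSym A ∧ A.rank ≤ r}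

noncomputable def wSmall (K : Type) [Field K] (k r m : ℕ) : ℕ :=
  Nat.card {A : Matrix (Fin m) (Fin m) K //
    IsSkewSym A ∧ A.rank = 2*r ∧ Matrix.trace (Estd K k m * A) ≠ 0}

noncomputable def Wcap (K : Type) [Field K] (k t m : ℕ) : ℕ :=
  Nat.card {A : Matrix (Fin m) (Fin m) K //
    IsSkewSym A ∧ A.rank ≤ 2*t ∧ Matrix.trace (Estd K k m * A) ≠ 0}

noncomputable def projWt (K : Type) [Field K] (m t : ℕ)
    (φ : Matrix (Fin m) (Fin m) K →ₗ[K] K) : ℕ :=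
  Nat.card {x : Projectivization K (Matrix (Fin m) (Fin m) K) //
    ∃ (A : Matrix (Fin m) (Fin m) K) (h : A ≠ 0),
      x = Projectivization.mk K A h ∧ IsSkewSym A ∧ A.rank ≤ 2*t ∧ φ A ≠ 0}

/-!
Write a skew-symmetric matrix `A` of size `m` as `[[0, u], [-uᵀ, B]]`, and let `C` be `B` without
its first row and column. The rank of `A` is `rank B` if `u` lies in the row space of `B` and
`rank B + 2` otherwise. Moreover `tr(E_{2k} A) = -2 u₀ + tr(E_{2k-2} C)`, so for odd `q` the trace
condition says that `u₀` avoids a single value, determined by `C`. Now count the `u` for fixed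
`B`. If `rank B ≤ 2t - 2`, the rank of `A` imposes no condition and there are `(q - 1) q^(m-2)` of
them. If `rank B = 2t`, then `u` must lie in the row space of `B`, of size `q^(2t)`. Either the
first row of `B` is nonzero and `u₀` is a nonzero functional on this space, leaving
`(q - 1) q^(2t-1)` vectors, or it is zero, so that `u₀ = 0` and all `q^(2t)` vectors count exactly
when `tr(E_{2k-2} C) ≠ 0`.
-/

section Rank

variable {K : Type*} [Field K] {m n : ℕ}

lemma rank_vecCons_of_mem {u : Fin n → K} {A : Matrix (Fin m) (Fin n) K}
    (hu : u ∈ LinearMap.range A.vecMulLinear) : (of (vecCons u A.row)).rank = A.rank := by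
  rw [range_vecMulLinear] at hu
  rw [rank_eq_finrank_span_row, rank_eq_finrank_span_row,
    show (of (vecCons u A.row)).row = Fin.cons u A.row from rfl, Fin.range_cons,
    Submodule.span_insert_eq_span hu]

lemma rank_vecCons_of_notMem {u : Fin n → K} {A : Matrix (Fin m) (Fin n) K}
    (hu : u ∉ LinearMap.range A.vecMulLinear) : (of (vecCons u A.row)).rank = A.rank + 1 := by
  rw [range_vecMulLinear] at hu
  rw [rank_eq_finrank_span_row, rank_eq_finrank_span_row,
    show (of (vecCons u A.row)).row = Fin.cons u A.row from rfl, Fin.range_cons,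
    Submodule.span_insert, sup_comm, Submodule.finrank_sup_span_singleton hu]

end Rank

section Counting

lemma natCard_subtype_and {α : Type*} (P Q : α → Prop) [Fintype {a // P a}] [DecidablePred Q] :
    Nat.card {a // P a ∧ Q a} = ∑ a : {a // P a}, if Q a then 1 else 0 := by
  rw [Finset.sum_boole, Nat.cast_id, ← Fintype.card_subtype, ← Nat.card_eq_fintype_card,
    Nat.card_congr (Equiv.subtypeSubtypeEquivSubtypeInter P Q)]

variable {K V : Type*} [Field K] [Fintype K] [AddCommGroup V] [Module K V]

lemma natCard_apply_ne {φ : Module.Dual K V} (hφ : φ ≠ 0) (c : K) {d : ℕ}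
    (hd : Module.finrank K V = d + 1) :
    Nat.card {v // φ v ≠ c} = (Fintype.card K - 1) * Fintype.card K ^ d := by
  classical
  have : Module.Finite K V := Module.finite_of_finrank_eq_succ hd
  have : Finite V := Module.finite_of_finite K
  have := Fintype.ofFinite V
  have hker : Module.finrank K (LinearMap.ker φ) = d :=
    Nat.succ_injective ((Module.Dual.finrank_ker_add_one_of_ne_zero hφ).trans hd)
  have hfiber : Fintype.card {v // φ v = c} = Fintype.card K ^ d := by
    have hφ' := LinearMap.surjective hφ
    rw [← hker, ← Module.card_eq_pow_finrank, Fintype.card_subtype,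
      AddMonoidHom.card_fiber_eq_of_mem_range φ (hφ' c) (hφ' 0), ← Fintype.card_subtype]
    exact Fintype.card_congr (Equiv.refl _)
  rw [Nat.card_eq_fintype_card, Fintype.card_subtype_compl, hfiber,
    Module.card_eq_pow_finrank (K := K), hd, Nat.sub_one_mul, pow_succ']

end Counting

section SkewBorder

variable {R : Type*} [Zero R] [Neg R] {n : ℕ}

/-- The matrix `[[0, u], [-uᵀ, B]]`. Every skew-symmetric matrix of positive size has this form,
with `B` skew-symmetric, which is what the inductions on the size rely on. -/
def skewBorder (B : Matrix (Fin n) (Fin n) R) (u : Fin n → R) :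
    Matrix (Fin (n + 1)) (Fin (n + 1)) R :=
  of (vecCons (vecCons 0 u) fun i => vecCons (-u i) (B i))

@[simp] lemma skewBorder_zero_zero (B : Matrix (Fin n) (Fin n) R) (u : Fin n → R) :
    skewBorder B u 0 0 = 0 := rfl

@[simp] lemma skewBorder_zero_succ (B : Matrix (Fin n) (Fin n) R) (u : Fin n → R) (j : Fin n) :
    skewBorder B u 0 j.succ = u j := rfl

@[simp] lemma skewBorder_succ_zero (B : Matrix (Fin n) (Fin n) R) (u : Fin n → R) (i : Fin n) :
    skewBorder B u i.succ 0 = -u i := rfl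

@[simp] lemma skewBorder_succ_succ (B : Matrix (Fin n) (Fin n) R) (u : Fin n → R)
    (i j : Fin n) : skewBorder B u i.succ j.succ = B i j := rfl

lemma transpose_skewBorder (B : Matrix (Fin n) (Fin n) R) (u : Fin n → R) :
    (skewBorder B u)ᵀ = of (vecCons (vecCons 0 (-u)) (of (vecCons u B.row))ᵀ.row) := by
  ext i j
  cases i using Fin.cases <;> cases j using Fin.cases <;> rfl

lemma skewBorder_apply_zero_eq_zero_iff {B : Matrix (Fin n) (Fin n) R} {u : Fin n → R} :
    skewBorder B u 0 = 0 ↔ u = 0 := by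
  simp [funext_iff, Fin.forall_fin_succ]

end SkewBorder

namespace IsSkewSym

variable {K : Type} [Field K] {n : ℕ}

lemma apply_swap {A : Matrix (Fin n) (Fin n) K} (hA : IsSkewSym A) (i j : Fin n) :
    A j i = -A i j := congrFun₂ hA.1 i j

lemma isSkewSym_skewBorder {B : Matrix (Fin n) (Fin n) K} (hB : IsSkewSym B) (u : Fin n → K) :
    IsSkewSym (skewBorder B u) := by
  refine ⟨?_, Fin.cases rfl hB.2⟩
  ext i j
  cases i using Fin.cases <;> cases j using Fin.cases
  case zero.zero => simp
  case succ.succ i j => exact hB.apply_swap i j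
  all_goals simp

lemma submatrix_succ {A : Matrix (Fin (n + 1)) (Fin (n + 1)) K} (hA : IsSkewSym A) :
    IsSkewSym (A.submatrix Fin.succ Fin.succ) :=
  ⟨ext fun i j => hA.apply_swap i.succ j.succ, fun i => hA.2 i.succ⟩

lemma skewBorder_submatrix_succ {A : Matrix (Fin (n + 1)) (Fin (n + 1)) K} (hA : IsSkewSym A) :
    skewBorder (A.submatrix Fin.succ Fin.succ) (fun j => A 0 j.succ) = A := by
  ext i j
  cases i using Fin.cases <;> cases j using Fin.cases <;>
    simp [hA.2, hA.apply_swap 0 (Fin.succ _)]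

/-- The correspondence between skew-symmetric matrices of size `n + 1` and pairs of a
skew-symmetric matrix of size `n` and a bordering row. -/
def skewBorderEquiv (K : Type) [Field K] (n : ℕ) :
    {B : Matrix (Fin n) (Fin n) K // IsSkewSym B} × (Fin n → K) ≃
      {A : Matrix (Fin (n + 1)) (Fin (n + 1)) K // IsSkewSym A} where
  toFun x := ⟨_, x.1.2.isSkewSym_skewBorder x.2⟩
  invFun A := ⟨⟨_, A.2.submatrix_succ⟩, fun j => A.1 0 j.succ⟩
  left_inv _ := rfl
  right_inv A := Subtype.ext A.2.skewBorder_submatrix_succ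

lemma mulVec_eq_neg_vecMul {B : Matrix (Fin n) (Fin n) K} (hB : IsSkewSym B) (x : Fin n → K) :
    B *ᵥ x = -(x ᵥ* B) := by
  rw [← vecMul_transpose, hB.1, vecMul_neg]

lemma vecMul_dotProduct_self {B : Matrix (Fin n) (Fin n) K} (hB : IsSkewSym B)
    (x : Fin n → K) : (x ᵥ* B) ⬝ᵥ x = 0 := by
  simp only [dotProduct, vecMul, Finset.sum_mul, ← Finset.sum_product']
  -- The terms at `(i, j)` and `(j, i)` cancel; in characteristic 2 the diagonal needs `B i i = 0`.
  refine Finset.sum_involution (fun p _ => p.swap) ?_ ?_ (by simp) (by simp)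
  · rintro ⟨i, j⟩ -
    simp only [Prod.swap, hB.apply_swap i j]
    ring
  · rintro ⟨i, j⟩ - hne hswap
    obtain rfl : j = i := congrArg Prod.fst hswap
    simp [hB.2] at hne

section Rank

variable {B : Matrix (Fin n) (Fin n) K} {u : Fin n → K}

lemma vecCons_zero_neg_mem_range_iff (hB : IsSkewSym B) :
    vecCons 0 (-u) ∈ LinearMap.range (of (vecCons u B.row))ᵀ.vecMulLinear ↔
      u ∈ LinearMap.range B.vecMulLinear := by
  have hvecMul (y : Fin n → K) :
      y ᵥ* (of (vecCons u B.row))ᵀ = vecCons (u ⬝ᵥ y) (-(y ᵥ* B)) := by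
    rw [vecMul_transpose, cons_mulVec, ← hB.mulVec_eq_neg_vecMul]
    rfl
  simp only [LinearMap.mem_range, vecMulLinear_apply, hvecMul]
  refine exists_congr fun y => ⟨fun h => neg_injective (Fin.cons_injective2 h).2, ?_⟩
  rintro rfl
  rw [hB.vecMul_dotProduct_self]

lemma rank_skewBorder_of_mem (hB : IsSkewSym B) (hu : u ∈ LinearMap.range B.vecMulLinear) :
    (skewBorder B u).rank = B.rank := by
  rw [← rank_transpose, transpose_skewBorder,
    rank_vecCons_of_mem (hB.vecCons_zero_neg_mem_range_iff.2 hu), rank_transpose,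
    rank_vecCons_of_mem hu]

lemma rank_skewBorder_of_notMem (hB : IsSkewSym B) (hu : u ∉ LinearMap.range B.vecMulLinear) :
    (skewBorder B u).rank = B.rank + 2 := by
  rw [← rank_transpose, transpose_skewBorder,
    rank_vecCons_of_notMem (mt hB.vecCons_zero_neg_mem_range_iff.1 hu), rank_transpose,
    rank_vecCons_of_notMem hu]

lemma rank_skewBorder_zero (hB : IsSkewSym B) : (skewBorder B 0).rank = B.rank :=
  hB.rank_skewBorder_of_mem (Submodule.zero_mem _)

lemma rank_skewBorder_le (hB : IsSkewSym B) (u : Fin n → K) :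
    (skewBorder B u).rank ≤ B.rank + 2 := by
  by_cases hu : u ∈ LinearMap.range B.vecMulLinear
  · exact (hB.rank_skewBorder_of_mem hu).trans_le (Nat.le_add_right _ _)
  · exact (hB.rank_skewBorder_of_notMem hu).le

lemma rank_le_rank_skewBorder (hB : IsSkewSym B) (u : Fin n → K) :
    B.rank ≤ (skewBorder B u).rank := by
  by_cases hu : u ∈ LinearMap.range B.vecMulLinear
  · exact (hB.rank_skewBorder_of_mem hu).ge
  · exact (hB.rank_skewBorder_of_notMem hu).symm ▸ Nat.le_add_right _ _

lemma rank_skewBorder_le_rank_iff (hB : IsSkewSym B) :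
    (skewBorder B u).rank ≤ B.rank ↔ u ∈ LinearMap.range B.vecMulLinear := by
  refine ⟨fun h => ?_, fun hu => (hB.rank_skewBorder_of_mem hu).le⟩
  by_contra hu
  have := hB.rank_skewBorder_of_notMem hu
  omega

end Rank

lemma even_rank {A : Matrix (Fin n) (Fin n) K} (hA : IsSkewSym A) : Even A.rank := by
  induction n with
  | zero => simp [Nat.le_zero.1 A.rank_le_width]
  | succ n ih =>
    have hB := hA.submatrix_succ
    rw [← hA.skewBorder_submatrix_succ]
    by_cases hu : (fun j => A 0 j.succ) ∈
        LinearMap.range (A.submatrix Fin.succ Fin.succ).vecMulLinear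
    · rw [hB.rank_skewBorder_of_mem hu]
      exact ih hB
    · rw [hB.rank_skewBorder_of_notMem hu]
      exact (ih hB).add even_two

section RowSpace

variable [Fintype K] {B : Matrix (Fin n) (Fin n) K} {i : Fin n}

lemma natCard_rowSpace_apply_ne_of_row_ne_zero (hB : IsSkewSym B) (hi : B i ≠ 0) (c : K) {r : ℕ}
    (hr : B.rank = r + 1) :
    Nat.card {u : Fin n → K // u ∈ LinearMap.range B.vecMulLinear ∧ u i ≠ c} =
      (Fintype.card K - 1) * Fintype.card K ^ r := by
  let φ : Module.Dual K (LinearMap.range B.vecMulLinear) :=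
    LinearMap.proj i ∘ₗ Submodule.subtype _
  have hφ : φ ≠ 0 := by
    obtain ⟨j, hj⟩ := Function.ne_iff.1 hi
    intro h
    have h' : (Pi.single j 1 ᵥ* B) i = 0 := LinearMap.congr_fun h ⟨_, Pi.single j 1, rfl⟩
    rw [single_one_vecMul, row_apply, hB.apply_swap i j] at h'
    exact hj (neg_eq_zero.1 h')
  rw [← natCard_apply_ne hφ c]
  · exact Nat.card_congr (Equiv.subtypeSubtypeEquivSubtypeInter _ _).symm
  · rw [range_vecMulLinear, ← rank_eq_finrank_span_row, hr]

lemma natCard_rowSpace_apply_ne_of_row_eq_zero [DecidableEq K] (hB : IsSkewSym B)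
    (hi : B i = 0) (c : K) :
    Nat.card {u : Fin n → K // u ∈ LinearMap.range B.vecMulLinear ∧ u i ≠ c} =
      if c ≠ 0 then Fintype.card K ^ B.rank else 0 := by
  have hzero (u : Fin n → K) (hu : u ∈ LinearMap.range B.vecMulLinear) : u i = 0 := by
    obtain ⟨x, rfl⟩ := hu
    simp [vecMul, dotProduct, hB.apply_swap i, hi]
  have hiff (u : Fin n → K) : u ∈ LinearMap.range B.vecMulLinear ∧ u i ≠ c ↔
      u ∈ LinearMap.range B.vecMulLinear ∧ c ≠ 0 :=
    and_congr_right fun hu => by rw [hzero u hu, ne_comm]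
  simp only [hiff]
  split_ifs with hc
  · simp only [hc, not_false_eq_true, and_true, ne_eq]
    rw [rank_eq_finrank_span_row, ← range_vecMulLinear, ← Nat.card_eq_fintype_card]
    exact Module.natCard_eq_pow_finrank
  · simp [hc]

end RowSpace

lemma natCard_succ [Finite K] [Fintype {B : Matrix (Fin n) (Fin n) K // IsSkewSym B}]
    (P : Matrix (Fin (n + 1)) (Fin (n + 1)) K → Prop) :
    Nat.card {A // IsSkewSym A ∧ P A} =
      ∑ B : {B : Matrix (Fin n) (Fin n) K // IsSkewSym B},
        Nat.card {u : Fin n → K // P (skewBorder B.1 u)} := by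
  rw [← Nat.card_sigma]
  refine Nat.card_congr ?_
  calc {A // IsSkewSym A ∧ P A}
    _ ≃ {A : {A // IsSkewSym A} // P A.1} := (Equiv.subtypeSubtypeEquivSubtypeInter _ _).symm
    _ ≃ {x // P (skewBorderEquiv K n x).1} :=
      ((skewBorderEquiv K n).subtypeEquiv fun _ => Iff.rfl).symm
    _ ≃ Σ B : {B : Matrix (Fin n) (Fin n) K // IsSkewSym B}, {u // P (skewBorder B.1 u)} :=
      Equiv.subtypeProdEquivSigmaSubtype
        fun (B : {B : Matrix (Fin n) (Fin n) K // IsSkewSym B}) u => P (skewBorder B.1 u)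

lemma natCard_row_zero_eq_zero (P : Matrix (Fin (n + 1)) (Fin (n + 1)) K → Prop) :
    Nat.card {A // IsSkewSym A ∧ A 0 = 0 ∧ P A} =
      Nat.card {B : Matrix (Fin n) (Fin n) K // IsSkewSym B ∧ P (skewBorder B 0)} := by
  symm
  refine Nat.card_eq_of_bijective (fun B => ⟨skewBorder B.1 0, B.2.1.isSkewSym_skewBorder 0,
    skewBorder_apply_zero_eq_zero_iff.2 rfl, B.2.2⟩) ⟨fun B C h => ?_, ?_⟩
  · exact Subtype.ext (congrArg (fun A => A.1.submatrix Fin.succ Fin.succ) h)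
  · rintro ⟨A, hA, h0, hP⟩
    have hborder : skewBorder (A.submatrix Fin.succ Fin.succ) 0 = A := by
      rw [show 0 = fun j : Fin n => A 0 j.succ by rw [h0]; rfl, hA.skewBorder_submatrix_succ]
    exact ⟨⟨_, hA.submatrix_succ, hborder.symm ▸ hP⟩, Subtype.ext hborder⟩

lemma natCard_skewBorder_rank_le_apply_zero_ne [Fintype K] [DecidableEq K]
    {B : Matrix (Fin (n + 1)) (Fin (n + 1)) K} (hB : IsSkewSym B) (t : ℕ) (c : K) :
    Nat.card {u : Fin (n + 1) → K // (skewBorder B u).rank ≤ 2 * (t + 1) ∧ u 0 ≠ c} =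
      Fintype.card K ^ (2 * (t + 1)) *
          (if B 0 = 0 ∧ B.rank = 2 * (t + 1) ∧ c ≠ 0 then 1 else 0) +
        (Fintype.card K - 1) * Fintype.card K ^ (2 * t + 1) *
          (if B.rank = 2 * (t + 1) ∧ B 0 ≠ 0 then 1 else 0) +
        (Fintype.card K - 1) * Fintype.card K ^ n * (if B.rank ≤ 2 * t then 1 else 0) := by
  rcases le_or_gt B.rank (2 * t) with hle | hgt
  · have hne : B.rank ≠ 2 * (t + 1) := by omega
    have hrank (u : Fin (n + 1) → K) : (skewBorder B u).rank ≤ 2 * (t + 1) :=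
      (hB.rank_skewBorder_le u).trans (by omega)
    have hproj : (LinearMap.proj 0 : Module.Dual K (Fin (n + 1) → K)) ≠ 0 := fun h =>
      one_ne_zero (LinearMap.congr_fun h 1)
    have hcard := natCard_apply_ne hproj c (Module.finrank_fin_fun K)
    simpa [hrank, hne, hle] using hcard
  · have hnle : ¬ B.rank ≤ 2 * t := hgt.not_ge
    by_cases heq : B.rank = 2 * (t + 1)
    · simp only [← heq, hB.rank_skewBorder_le_rank_iff]
      by_cases h0 : B 0 = 0
      · rw [hB.natCard_rowSpace_apply_ne_of_row_eq_zero h0]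
        simp [h0, heq]
      · rw [hB.natCard_rowSpace_apply_ne_of_row_ne_zero h0 c heq]
        simp [h0, heq]
    · obtain ⟨s, hs⟩ := hB.even_rank
      have hrank (u : Fin (n + 1) → K) : ¬ (skewBorder B u).rank ≤ 2 * (t + 1) := by
        have := hB.rank_le_rank_skewBorder u
        omega
      simp [hrank, hnle, heq]

theorem natCard_rank_le_apply_zero_one_ne [Fintype K] (f : Matrix (Fin n) (Fin n) K → K)
    (t : ℕ) :
    Nat.card {A : Matrix (Fin (n + 2)) (Fin (n + 2)) K // IsSkewSym A ∧ A.rank ≤ 2 * (t + 1) ∧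
        A 0 1 ≠ f (A.submatrix (Fin.succ ∘ Fin.succ) (Fin.succ ∘ Fin.succ))} =
      Fintype.card K ^ (2 * (t + 1)) *
          Nat.card {C // IsSkewSym C ∧ C.rank = 2 * (t + 1) ∧ f C ≠ 0} +
        (Fintype.card K - 1) * Fintype.card K ^ (2 * t + 1) *
          Nat.card {B : Matrix (Fin (n + 1)) (Fin (n + 1)) K //
            IsSkewSym B ∧ B.rank = 2 * (t + 1) ∧ B 0 ≠ 0} +
        (Fintype.card K - 1) * Fintype.card K ^ n * Na K (2 * t) (n + 1) := by
  classical
  have hw : Nat.card {C // IsSkewSym C ∧ C.rank = 2 * (t + 1) ∧ f C ≠ 0} =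
      Nat.card {B : Matrix (Fin (n + 1)) (Fin (n + 1)) K // IsSkewSym B ∧ B 0 = 0 ∧
        B.rank = 2 * (t + 1) ∧ f (B.submatrix Fin.succ Fin.succ) ≠ 0} := by
    rw [natCard_row_zero_eq_zero]
    exact Nat.card_congr (Equiv.subtypeEquivRight fun C =>
      and_congr_right fun hC => by rw [hC.rank_skewBorder_zero]; rfl)
  rw [hw, Na, natCard_succ, natCard_subtype_and, natCard_subtype_and, natCard_subtype_and,
    Finset.mul_sum, Finset.mul_sum, Finset.mul_sum, ← Finset.sum_add_distrib,
    ← Finset.sum_add_distrib]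
  exact Finset.sum_congr rfl fun B _ =>
    B.2.natCard_skewBorder_rank_le_apply_zero_ne t (f (B.1.submatrix Fin.succ Fin.succ))

end IsSkewSym

lemma na_succ (K : Type) [Field K] [Finite K] (r n : ℕ) :
    na K r (n + 1) = na K r n +
      Nat.card {B : Matrix (Fin (n + 1)) (Fin (n + 1)) K //
        IsSkewSym B ∧ B.rank = r ∧ B 0 ≠ 0} := by
  classical
  have := Fintype.ofFinite K
  have hna : na K r n = Nat.card {B : Matrix (Fin (n + 1)) (Fin (n + 1)) K //
      IsSkewSym B ∧ B 0 = 0 ∧ B.rank = r} := by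
    rw [IsSkewSym.natCard_row_zero_eq_zero]
    exact Nat.card_congr (Equiv.subtypeEquivRight fun B =>
      and_congr_right fun hB => by rw [hB.rank_skewBorder_zero])
  rw [hna, na, natCard_subtype_and, natCard_subtype_and, natCard_subtype_and,
    ← Finset.sum_add_distrib]
  refine Finset.sum_congr rfl fun B _ => ?_
  by_cases h0 : B.1 0 = 0 <;> simp [h0]

lemma trace_Estd_succ_mul {K : Type} [Field K] (k n : ℕ)
    (A : Matrix (Fin (n + 2)) (Fin (n + 2)) K) :
    trace (Estd K (k + 1) (n + 2) * A) = A 1 0 - A 0 1 +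
      trace (Estd K k n * A.submatrix (Fin.succ ∘ Fin.succ) (Fin.succ ∘ Fin.succ)) := by
  have hE (i j : Fin n) : Estd K (k + 1) (n + 2) i.succ.succ j.succ.succ = Estd K k n i j := by
    simp [Estd, mul_add, add_assoc]
  have h01 : Estd K (k + 1) (n + 2) 0 1 = 1 := by simp [Estd, mul_add]
  have h10 : Estd K (k + 1) (n + 2) 1 0 = -1 := by simp [Estd, mul_add]
  simp only [trace, diag, mul_apply, Fin.sum_univ_succ, Fin.succ_zero_eq_one, hE, h01, h10]
  simp [Estd]
  ring

lemma IsSkewSym.trace_Estd_succ_mul_ne_zero_iff {K : Type} [Field K]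
    (hK : ringChar K ≠ 2) (k : ℕ) {n : ℕ}
    {A : Matrix (Fin (n + 2)) (Fin (n + 2)) K} (hA : IsSkewSym A) :
    trace (Estd K (k + 1) (n + 2) * A) ≠ 0 ↔ A 0 1 ≠
      trace (Estd K k n * A.submatrix (Fin.succ ∘ Fin.succ) (Fin.succ ∘ Fin.succ)) / 2 := by
  rw [trace_Estd_succ_mul, hA.apply_swap 0 1, Ne, Ne, eq_div_iff (Ring.two_ne_zero hK),
    not_iff_not]
  constructor <;> intro h <;> linear_combination -h

theorem stmt14_general (K : Type) [Field K] [Fintype K] (hK : ringChar K ≠ 2) (n k t : ℕ) :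
    (Wcap K (k + 1) (t + 1) (n + 2) : ℤ) =
      (Fintype.card K : ℤ) ^ (2 * (t + 1)) * wSmall K k (t + 1) n
        + ((Fintype.card K : ℤ) - 1) * (Fintype.card K : ℤ) ^ (2 * t + 1)
            * ((na K (2 * (t + 1)) (n + 1) : ℤ) - na K (2 * (t + 1)) n)
        + ((Fintype.card K : ℤ) - 1) * (Fintype.card K : ℤ) ^ n * Na K (2 * t) (n + 1) := by
  have hW : Wcap K (k + 1) (t + 1) (n + 2) =
      Nat.card {A : Matrix (Fin (n + 2)) (Fin (n + 2)) K //
        IsSkewSym A ∧ A.rank ≤ 2 * (t + 1) ∧ A 0 1 ≠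
          trace (Estd K k n * A.submatrix (Fin.succ ∘ Fin.succ) (Fin.succ ∘ Fin.succ)) / 2} :=
    Nat.card_congr (Equiv.subtypeEquivRight fun A => and_congr_right fun hA =>
      and_congr_right' (hA.trace_Estd_succ_mul_ne_zero_iff hK k))
  have hw : wSmall K k (t + 1) n = Nat.card {C : Matrix (Fin n) (Fin n) K //
      IsSkewSym C ∧ C.rank = 2 * (t + 1) ∧ trace (Estd K k n * C) / 2 ≠ 0} := by
    simp only [wSmall, ne_eq, div_eq_zero_iff, Ring.two_ne_zero hK, or_false]
  rw [hW, IsSkewSym.natCard_rank_le_apply_zero_one_ne (fun C => trace (Estd K k n * C) / 2), hw,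
    na_succ]
  push_cast [Fintype.card_pos (α := K)]
  ring

theorem stmt14 (K : Type) [Field K] [Fintype K] (hchar : ringChar K ≠ 2)
    (m k t : ℕ) (ht : 0 < t) (htm : 2*t ≤ m) (hk : 0 < k) (hkm : 2*k ≤ m) :
    (Wcap K k t m : ℤ) =
      ((Fintype.card K : ℤ)^(2*t) * wSmall K (k-1) t (m-2)
        + ((Fintype.card K : ℤ) - 1) * (Fintype.card K : ℤ)^(2*t-1)
            * ((na K (2*t) (m-1) : ℤ) - (na K (2*t) (m-2) : ℤ)))
      + ((Fintype.card K : ℤ) - 1) * (Fintype.card K : ℤ)^(m-2)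
          * (Na K (2*t-2) (m-1) : ℤ) := by
  obtain ⟨n, rfl⟩ := Nat.exists_eq_add_of_le' (show 2 ≤ m by omega)
  obtain ⟨k, rfl⟩ := Nat.exists_eq_add_of_le' hk
  obtain ⟨t, rfl⟩ := Nat.exists_eq_add_of_le' ht
  exact stmt14_general K hchar n k t
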